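/- Let κ > 0, σ > 0, r ∈ ℝ, τ > 0 and S₀ > 0, and set a = σ²κτ/S₀. Then the function S ↦ (S/(τσ²))·e^{-rτ}·E[ (A_{σ²τ} − σ²κτ/S)^+ ] is twice differentiable at S₀ and its second derivative at S₀ equals Γ₀ = (σ²κ²τ/S₀³)·e^{-rτ} · g_{τσ²}(a), where g_{τσ²}(a) = (2/a²)·( P[A_{τσ²} ≤ a] − P[A_{τσ²}^{(1)} ≤ a] ) is the density of A_{τσ²} at a. -/

import Mathlib

open MeasureTheory ProbabilityTheory Real Set

noncomputable section

/-- A standard one-dimensional Brownian motion `B` (with `B 0 = 0`, continuous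
paths, Gaussian increments and independent increments) on a probability space
with measure `P`. -/
structure IsBrownianMotion {Ω : Type*} [MeasurableSpace Ω]
    (P : Measure Ω) (B : ℝ → Ω → ℝ) : Prop where
  isProbabilityMeasure : IsProbabilityMeasure P
  measurable : ∀ t : ℝ, Measurable (B t)
  start : ∀ ω, B 0 ω = 0
  continuous_paths : ∀ ω, Continuous fun t => B t ω
  gaussian_increments : ∀ s t : ℝ, 0 ≤ s → s ≤ t →
    P.map (fun ω => B t ω - B s ω) = gaussianReal 0 (Real.toNNReal (t - s))
  indep_increments : ∀ t : ℕ → ℝ, Monotone t → 0 ≤ t 0 →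
    iIndepFun
      (fun (i : ℕ) (ω : Ω) => B (t (i + 1)) ω - B (t i) ω) P

/-- The exponential martingale `M_t = exp (B_t - t/2)`. -/
def M {Ω : Type*} (B : ℝ → Ω → ℝ) (t : ℝ) (ω : Ω) : ℝ :=
  Real.exp (B t ω - t / 2)

/-- The time integral `A_t = ∫_0^t exp (B_s - s/2) ds`. -/
def A {Ω : Type*} (B : ℝ → Ω → ℝ) (t : ℝ) (ω : Ω) : ℝ :=
  ∫ s in (0 : ℝ)..t, Real.exp (B s ω - s / 2)

/-- The time integral with drift `ν`: `A_t^{(ν)} = ∫_0^t exp (B_s + (ν - 1/2) s) ds`. -/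
def Adrift {Ω : Type*} (B : ℝ → Ω → ℝ) (ν t : ℝ) (ω : Ω) : ℝ :=
  ∫ s in (0 : ℝ)..t, Real.exp (B s ω + (ν - 1 / 2) * s)


lemma gauss_shift (v : NNReal) (f : ℝ → ENNReal) (hf : Measurable f) :
    ∫⁻ x, ENNReal.ofReal (Real.exp (x - v / 2)) * f x ∂(gaussianReal 0 v)
      = ∫⁻ x, f (x + v) ∂(gaussianReal 0 v) := by
  by_cases hv : v = 0
  · subst hv
    simp [gaussianReal_zero_var]
  · have h1 : ∫⁻ x, f (x + v) ∂(gaussianReal 0 v) = ∫⁻ x, f x ∂(gaussianReal v v) := by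
      have := gaussianReal_map_add_const (μ := 0) (v := v) (v : ℝ)
      rw [zero_add] at this
      rw [← this, lintegral_map hf (by fun_prop)]
    rw [h1, gaussianReal_of_var_ne_zero _ hv, gaussianReal_of_var_ne_zero _ hv,
      lintegral_withDensity_eq_lintegral_mul _ (measurable_gaussianPDF _ _) (by fun_prop),
      lintegral_withDensity_eq_lintegral_mul _ (measurable_gaussianPDF _ _) hf]
    congr 1
    ext x
    simp only [Pi.mul_apply]
    rw [← mul_assoc]
    congr 1
    rw [gaussianPDF_def, gaussianPDF_def, ← ENNReal.ofReal_mul (gaussianPDFReal_nonneg _ _ _)]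
    congr 1
    simp only [gaussianPDFReal]
    rw [mul_assoc, ← Real.exp_add]
    congr 2
    have : (v : ℝ) ≠ 0 := by exact_mod_cast hv
    field_simp
    ring

lemma discrete_cm {Ω : Type*} [MeasurableSpace Ω] (P : Measure Ω)
    [IsProbabilityMeasure P] (X : ℕ → Ω → ℝ) (v : ℕ → NNReal)
    (hm : ∀ i, Measurable (X i)) (hl : ∀ i, P.map (X i) = gaussianReal 0 (v i))
    (hi : iIndepFun X P) (n N : ℕ) (G : (Fin N → ℝ) → ENNReal) (hG : Measurable G) :
    ∫⁻ ω, (∏ i : Fin N, if (i : ℕ) < n then ENNReal.ofReal (Real.exp (X i ω - v i / 2)) else 1)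
        * G (fun i => X i ω) ∂P
      = ∫⁻ ω, G (fun i => X i ω + if (i : ℕ) < n then (v i : ℝ) else 0) ∂P := by
  have hi' : iIndepFun (fun i : Fin N => X i) P := hi.precomp Fin.val_injective
  set D : Fin N → ℝ → ENNReal := fun i x =>
    if (i : ℕ) < n then ENNReal.ofReal (Real.exp (x - v i / 2)) else 1 with hD
  have hDm : ∀ i, Measurable (D i) := by
    intro i
    simp only [hD]
    split_ifs <;> fun_prop
  set c : Fin N → ℝ := fun i => if (i : ℕ) < n then (v i : ℝ) else 0 with hc
  have key : ∀ (i : Fin N) (s : Set ℝ), MeasurableSet s →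
      ∫⁻ ω, D i (X i ω) * s.indicator 1 (X i ω) ∂P
       = (P.map (fun ω => X i ω + c i)) s := by
    intro i s hs
    have e : (P.map (fun ω => X i ω + c i)) s = ∫⁻ x, s.indicator 1 (x + c i) ∂(P.map (X i)) := by
      rw [lintegral_map (f := fun x => s.indicator 1 (x + c i))
        ((measurable_one.indicator hs).comp (measurable_id.add_const _)) (hm i)]
      have hmm : Measurable (fun ω => X i ω + c i) := (hm i).add_const _
      rw [← lintegral_map (f := s.indicator 1) (g := fun ω => X i ω + c i)
        (measurable_one.indicator hs) hmm]
      rw [lintegral_indicator_one hs]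
    rw [e, ← lintegral_map (f := fun x => D i x * s.indicator 1 x)
      ((hDm i).mul (measurable_one.indicator hs)) (hm i), hl]
    simp only [hD, hc]
    split_ifs with h
    · exact gauss_shift (v i) (s.indicator 1) (measurable_one.indicator hs)
    · simp
  have hprob : ∀ i : Fin N, IsProbabilityMeasure (P.map (fun ω => X i ω + c i)) :=
    fun i => Measure.isProbabilityMeasure_map ((hm i).add_const _).aemeasurable
  have hXm : Measurable (fun ω => fun i : Fin N => X i ω) := measurable_pi_lambda _ fun i => hm i
  have hXm2 : Measurable (fun ω => fun i : Fin N => X i ω + c i) :=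
    measurable_pi_lambda _ fun i => (hm i).add_const _
  have hPm : Measurable (fun ω => ∏ i : Fin N, D i (X i ω)) :=
    Finset.measurable_prod _ fun i _ => (hDm i).comp (hm i)
  have indbox : ∀ (s : Fin N → Set ℝ) (x : Fin N → ℝ),
      (Set.univ.pi s).indicator (1 : (Fin N → ℝ) → ENNReal) x = ∏ i, (s i).indicator 1 (x i) := by
    intro s x
    by_cases h : x ∈ Set.univ.pi s
    · rw [Set.indicator_of_mem h]
      symm
      apply Finset.prod_eq_one
      intro i _
      rw [Set.indicator_of_mem (h i (mem_univ i))]; rfl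
    · rw [Set.indicator_of_notMem h]
      simp only [Set.mem_pi, mem_univ, true_imp_iff, not_forall] at h
      obtain ⟨i, hi⟩ := h
      symm
      apply Finset.prod_eq_zero (Finset.mem_univ i)
      rw [Set.indicator_of_notMem hi]
  have Q1 : (P.withDensity (fun ω => ∏ i : Fin N, D i (X i ω))).map (fun ω => fun i : Fin N => X i ω)
      = Measure.pi (fun i : Fin N => P.map (fun ω => X i ω + c i)) := by
    symm
    apply Measure.pi_eq
    intro s hs
    have hbox : MeasurableSet (Set.univ.pi s) := MeasurableSet.univ_pi hs
    rw [← lintegral_indicator_one hbox, lintegral_map (measurable_one.indicator hbox) hXm,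
      lintegral_withDensity_eq_lintegral_mul _ hPm (show Measurable (fun ω => (Set.univ.pi s).indicator (1 : (Fin N → ℝ) → ENNReal) (fun i : Fin N => X i ω)) from (measurable_one.indicator hbox).comp hXm)]
    have : ∀ ω, ((fun ω => ∏ i : Fin N, D i (X i ω)) * fun ω => (Set.univ.pi s).indicator (1 : (Fin N → ℝ) → ENNReal) (fun i : Fin N => X i ω)) ω
        = ∏ i : Fin N, (fun x => D i x * (s i).indicator 1 x) (X i ω) := by
      intro ω
      simp only [Pi.mul_apply]
      rw [indbox, ← Finset.prod_mul_distrib]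
    simp_rw [this]
    rw [lintegral_prod_eq_prod_lintegral_of_indepFun Finset.univ
      (fun (i : Fin N) ω => (fun x => D i x * (s i).indicator 1 x) (X i ω))]
    · exact Finset.prod_congr rfl fun i _ => key i (s i) (hs i)
    · exact hi'.comp (fun i x => D i x * (s i).indicator 1 x)
        (fun i => (hDm i).mul (measurable_one.indicator (hs i)))
    · intro i
      exact ((hDm i).mul (measurable_one.indicator (hs i))).comp (hm i)
  have Q2 : P.map (fun ω => fun i : Fin N => X i ω + c i)
      = Measure.pi (fun i : Fin N => P.map (fun ω => X i ω + c i)) := by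
    apply (iIndepFun_iff_map_fun_eq_pi_map (f := fun (i : Fin N) ω => X i ω + c i) (fun i => ((hm i).add_const _).aemeasurable)).1
    exact hi'.comp (fun i x => x + c i) (fun i => measurable_id.add_const _)
  rw [← lintegral_map (f := G) hG hXm2, Q2, ← Q1, lintegral_map hG hXm,
    lintegral_withDensity_eq_lintegral_mul _ hPm (show Measurable (fun ω => G (fun i : Fin N => X i ω)) from hG.comp hXm)]
  rfl

lemma bm_cm {Ω : Type*} [MeasurableSpace Ω] (P : Measure Ω) (B : ℝ → Ω → ℝ)
    (hB : IsBrownianMotion P B) (T : ℕ → ℝ) (hT : Monotone T) (hT0 : T 0 = 0)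
    (n N : ℕ) (hn : n ≤ N) (G : (Fin (N + 1) → ℝ) → ENNReal) (hG : Measurable G) :
    ∫⁻ ω, ENNReal.ofReal (Real.exp (B (T n) ω - T n / 2)) * G (fun k => B (T k) ω) ∂P
      = ∫⁻ ω, G (fun k => B (T k) ω + min (T k) (T n)) ∂P := by
  have := hB.isProbabilityMeasure
  have tel : ∀ k ω, B (T k) ω = ∑ i ∈ Finset.range k, (B (T (i + 1)) ω - B (T i) ω) := by
    intro k ω
    rw [Finset.sum_range_sub (fun i => B (T i) ω), hT0, hB.start, sub_zero]
  have telT : ∀ k, T k = ∑ i ∈ Finset.range k, (T (i + 1) - T i) := by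
    intro k
    rw [Finset.sum_range_sub T, hT0, sub_zero]
  have hTn : ∀ i, 0 ≤ T i := fun i => hT0 ▸ hT (Nat.zero_le i)
  have hv : ∀ i, ((Real.toNNReal (T (i + 1) - T i) : NNReal) : ℝ) = T (i + 1) - T i := fun i =>
    Real.coe_toNNReal _ (sub_nonneg.2 (hT (Nat.le_succ i)))
  have h := discrete_cm P (fun (i : ℕ) ω => B (T (i + 1)) ω - B (T i) ω)
    (fun i => Real.toNNReal (T (i + 1) - T i))
    (fun i => (hB.measurable _).sub (hB.measurable _))
    (fun i => hB.gaussian_increments _ _ (hTn i) (hT (Nat.le_succ i)))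
    (hB.indep_increments T hT hT0.ge) n N
    (fun x => G (fun k => ∑ i : Fin N, if (i : ℕ) < k then x i else 0))
    (by
      apply hG.comp
      apply measurable_pi_lambda
      intro k
      apply Finset.measurable_sum
      intro i _
      split_ifs <;> fun_prop)
  have conv : ∀ (f : ℕ → ℝ) (k : ℕ), k ≤ N →
      (∑ i : Fin N, if (i : ℕ) < k then f i else 0) = ∑ i ∈ Finset.range k, f i := by
    intro f k hk
    rw [Fin.sum_univ_eq_sum_range (fun i => if i < k then f i else 0), ← Finset.sum_filter]
    congr 1
    ext i
    simp
    omega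
  have convp : ∀ ω, (∏ i : Fin N, if (i : ℕ) < n then
      ENNReal.ofReal (Real.exp ((B (T (i + 1)) ω - B (T i) ω) - (Real.toNNReal (T (i + 1) - T i) : NNReal) / 2)) else 1)
      = ENNReal.ofReal (Real.exp (B (T n) ω - T n / 2)) := by
    intro ω
    have : ∀ i : Fin N, (if (i : ℕ) < n then
      ENNReal.ofReal (Real.exp ((B (T (i + 1)) ω - B (T i) ω) - (Real.toNNReal (T (i + 1) - T i) : NNReal) / 2)) else 1)
      = ENNReal.ofReal (Real.exp (if (i : ℕ) < n then ((B (T (i + 1)) ω - B (T i) ω) - (T (i + 1) - T i) / 2) else 0)) := by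
      intro i
      split_ifs
      · rw [hv]
      · simp
    simp_rw [this]
    rw [← ENNReal.ofReal_prod_of_nonneg (fun _ _ => (Real.exp_pos _).le), ← Real.exp_sum]
    rw [conv (fun i => (B (T (i + 1)) ω - B (T i) ω) - (T (i + 1) - T i) / 2) n hn,
      Finset.sum_sub_distrib, ← Finset.sum_div, ← tel, ← telT]
  simp_rw [convp] at h
  trans
  · refine Eq.trans ?_ h
    congr 1 with ω
    congr 2
    ext k
    rw [conv (fun i => B (T (i + 1)) ω - B (T i) ω) k (by omega), ← tel]
  · congr 1 with ω
    congr 1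
    ext k
    rw [conv (fun i => B (T (i + 1)) ω - B (T i) ω + if i < n then ((Real.toNNReal (T (i + 1) - T i) : NNReal) : ℝ) else 0) k (by omega),
      Finset.sum_add_distrib, ← tel]
    simp_rw [hv]
    congr 1
    rw [← Finset.sum_filter]
    have : (Finset.range k).filter (· < n) = Finset.range (min k n) := by
      ext i; simp
    rw [this, ← telT]
    exact hT.map_min


lemma riemann_tendsto (f : ℝ → ℝ) (hf : Continuous f) (a b : ℝ) (hab : a ≤ b) :
    Filter.Tendsto (fun n : ℕ => ∑ i ∈ Finset.range n, (b - a) / n * f (a + i * ((b - a) / n)))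
      Filter.atTop (nhds (∫ x in a..b, f x)) := by
  rw [Metric.tendsto_atTop]
  intro ε hε
  have huc : UniformContinuousOn f (Icc a b) :=
    isCompact_Icc.uniformContinuousOn_of_continuous hf.continuousOn
  rw [Metric.uniformContinuousOn_iff] at huc
  have hpos : 0 < b - a + 1 := by linarith
  obtain ⟨δ, hδ, hfd⟩ := huc (ε / (b - a + 1)) (by positivity)
  obtain ⟨n0, hn0⟩ := exists_nat_gt ((b - a) / δ)
  refine ⟨n0 + 1, fun n hn => ?_⟩
  have hnpos : (0 : ℝ) < n := by
    have : 0 < n := by omega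
    exact_mod_cast this
  have hnd : (b - a) / n < δ := by
    rw [div_lt_iff₀ hnpos]
    rw [div_lt_iff₀ hδ] at hn0
    have : (n0 : ℝ) ≤ n := by exact_mod_cast (by omega : n0 ≤ n)
    nlinarith
  set h := (b - a) / n with hh
  have hh0 : 0 ≤ h := div_nonneg (by linarith) hnpos.le
  have hnh : (n : ℝ) * h = b - a := by rw [hh]; field_simp
  have hint : ∫ x in a..b, f x = ∑ i ∈ Finset.range n, ∫ x in (a + i * h)..(a + (i + 1 : ℕ) * h), f x := by
    rw [intervalIntegral.sum_integral_adjacent_intervals (a := fun i : ℕ => a + i * h)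
      (fun k _ => hf.intervalIntegrable _ _)]
    simp [hnh]
  rw [dist_eq_norm, hint, ← Finset.sum_sub_distrib]
  have hterm : ∀ i ∈ Finset.range n,
      ‖h * f (a + i * h) - ∫ x in (a + i * h)..(a + (i + 1 : ℕ) * h), f x‖
        ≤ ε / (b - a + 1) * h := by
    intro i hi
    have hin : i < n := Finset.mem_range.1 hi
    have e1 : h * f (a + i * h) = ∫ x in (a + i * h)..(a + (i + 1 : ℕ) * h), f (a + i * h) := by
      rw [intervalIntegral.integral_const, smul_eq_mul]
      push_cast
      ring
    rw [e1, ← intervalIntegral.integral_sub (by simp) (hf.intervalIntegrable _ _)]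
    have hle : a + i * h ≤ a + (i + 1 : ℕ) * h := by push_cast; nlinarith
    have hi1 : ((i + 1 : ℕ) : ℝ) ≤ n := by exact_mod_cast hin
    have hub : a + (i + 1 : ℕ) * h ≤ b := by
      have := mul_le_mul_of_nonneg_right hi1 hh0
      linarith
    have hlb : a ≤ a + i * h := by
      have : 0 ≤ (i : ℝ) * h := by positivity
      linarith
    refine (intervalIntegral.norm_integral_le_of_norm_le_const (C := ε / (b - a + 1)) ?_).trans ?_
    · intro x hx
      rw [uIoc_of_le hle] at hx
      rw [← dist_eq_norm]
      apply le_of_lt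
      apply hfd _ ⟨hlb, by linarith⟩ _ ⟨by linarith [hx.1], by linarith [hx.2]⟩
      rw [Real.dist_eq, abs_lt]
      have := hx.2
      push_cast at this
      constructor <;> nlinarith [hx.1]
    · rw [abs_of_nonneg (by linarith)]
      apply le_of_eq
      push_cast
      ring
  refine (norm_sum_le_of_le _ hterm).trans_lt ?_
  rw [Finset.sum_const, Finset.card_range, nsmul_eq_mul]
  have : (n : ℝ) * (ε / (b - a + 1) * h) = ε * ((b - a) / (b - a + 1)) := by
    rw [← hnh]; ring
  rw [this]
  have : (b - a) / (b - a + 1) < 1 := by rw [div_lt_one hpos]; linarith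
  nlinarith

lemma measurable_pathint {Ω : Type*} [MeasurableSpace Ω] (f : ℝ → Ω → ℝ)
    (hm : ∀ s, Measurable (f s)) (hc : ∀ ω, Continuous fun s => f s ω) (a b : ℝ) (hab : a ≤ b) :
    Measurable (fun ω => ∫ s in a..b, f s ω) := by
  refine measurable_of_tendsto_metrizable
    (f := fun (n : ℕ) ω => ∑ i ∈ Finset.range n, (b - a) / n * f (a + i * ((b - a) / n)) ω) ?_ ?_
  · intro n
    exact Finset.measurable_sum _ fun i _ => (hm _).const_mul _
  · rw [tendsto_pi_nhds]
    intro ω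
    exact riemann_tendsto (fun s => f s ω) (hc ω) a b hab

lemma cm_bounded {Ω : Type*} [MeasurableSpace Ω] (P : Measure Ω) (B : ℝ → Ω → ℝ)
    (hB : IsBrownianMotion P B) (u t : ℝ) (hu : 0 ≤ u) (hut : u ≤ t)
    (G : BoundedContinuousFunction (ℝ × ℝ) NNReal) :
    ∫⁻ ω, ENNReal.ofReal (Real.exp (B u ω - u / 2)) *
        G (∫ s in (0 : ℝ)..u, Real.exp (B s ω - s / 2), ∫ s in u..t, Real.exp (B s ω - s / 2)) ∂P
      = ∫⁻ ω, G (∫ s in (0 : ℝ)..u, Real.exp (B s ω + s - s / 2),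
          ∫ s in u..t, Real.exp (B s ω + u - s / 2)) ∂P := by
  have := hB.isProbabilityMeasure
  let T : ℕ → ℕ → ℝ := fun n i => ((min i n : ℕ) : ℝ) * (u / n) + ((i - n : ℕ) : ℝ) * ((t - u) / n)
  have hTmono : ∀ n, Monotone (T n) := by
    intro n i j hij
    have h1 : 0 ≤ u / n := by positivity
    have h2 : 0 ≤ (t - u) / n := div_nonneg (by linarith) (by positivity)
    have h3 : ((min i n : ℕ) : ℝ) ≤ (min j n : ℕ) := by exact_mod_cast (by omega)
    have h4 : ((i - n : ℕ) : ℝ) ≤ (j - n : ℕ) := by exact_mod_cast (by omega)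
    exact add_le_add (mul_le_mul_of_nonneg_right h3 h1) (mul_le_mul_of_nonneg_right h4 h2)
  have hT0 : ∀ n, T n 0 = 0 := by intro n; simp [T]
  have hT1 : ∀ n i, i ≤ n → T n i = 0 + i * ((u - 0) / n) := by
    intro n i hi
    simp [T, hi]
  have hT2 : ∀ n i, n ≠ 0 → T n (n + i) = u + i * ((t - u) / n) := by
    intro n i hn
    have : (n : ℝ) ≠ 0 := by exact_mod_cast hn
    simp only [T, Nat.add_sub_cancel_left]
    rw [min_eq_right (by omega)]
    field_simp
  have hTn : ∀ n, n ≠ 0 → T n n = u := by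
    intro n hn
    simpa using hT2 n 0 hn
  let R1 : ℕ → (ℝ → ℝ) → ℝ := fun n w => ∑ i ∈ Finset.range n, (u - 0) / n * w (0 + i * ((u - 0) / n))
  let R2 : ℕ → (ℝ → ℝ) → ℝ := fun n w => ∑ i ∈ Finset.range n, (t - u) / n * w (u + i * ((t - u) / n))
  have step : ∀ n : ℕ, n ≠ 0 →
    ∫⁻ ω, ENNReal.ofReal (Real.exp (B u ω - u / 2)) *
        G (R1 n (fun s => Real.exp (B s ω - s / 2)), R2 n (fun s => Real.exp (B s ω - s / 2))) ∂P
      = ∫⁻ ω, G (R1 n (fun s => Real.exp (B s ω + s - s / 2)),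
          R2 n (fun s => Real.exp (B s ω + u - s / 2))) ∂P := by
    intro n hn
    have h := bm_cm P B hB (T n) (hTmono n) (hT0 n) n (n + n) (by omega)
      (fun w => (G (∑ i : Fin n, (u - 0) / n * Real.exp (w ⟨i, by omega⟩ - T n i / 2),
        ∑ i : Fin n, (t - u) / n * Real.exp (w ⟨n + i, by omega⟩ - T n (n + i) / 2)) : ENNReal))
      (by
        apply Measurable.coe_nnreal_ennreal
        apply G.continuous.measurable.comp
        apply Measurable.prodMk
        · exact Finset.measurable_sum _ fun i _ => by fun_prop
        · exact Finset.measurable_sum _ fun i _ => by fun_prop)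
    rw [hTn n hn] at h
    refine Eq.trans ?_ (h.trans ?_)
    · congr 1 with ω
      congr 4
      · simp only [R1]
        rw [← Fin.sum_univ_eq_sum_range (fun i => (u - 0) / n * Real.exp (B (0 + i * ((u - 0) / n)) ω - (0 + i * ((u - 0) / n)) / 2))]
        refine Finset.sum_congr rfl fun i _ => ?_
        rw [hT1 n i (by omega)]
      · simp only [R2]
        rw [← Fin.sum_univ_eq_sum_range (fun i => (t - u) / n * Real.exp (B (u + i * ((t - u) / n)) ω - (u + i * ((t - u) / n)) / 2))]
        refine Finset.sum_congr rfl fun i _ => ?_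
        rw [hT2 n i hn]
    · congr 1 with ω
      congr 3
      · simp only [R1]
        rw [← Fin.sum_univ_eq_sum_range (fun i => (u - 0) / n * Real.exp (B (0 + i * ((u - 0) / n)) ω + (0 + i * ((u - 0) / n)) - (0 + i * ((u - 0) / n)) / 2))]
        refine Finset.sum_congr rfl fun i _ => ?_
        have : T n i ≤ u := by rw [← hTn n hn]; exact hTmono n (by omega)
        rw [min_eq_left this, hT1 n i (by omega)]
      · simp only [R2]
        rw [← Fin.sum_univ_eq_sum_range (fun i => (t - u) / n * Real.exp (B (u + i * ((t - u) / n)) ω + u - (u + i * ((t - u) / n)) / 2))]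
        refine Finset.sum_congr rfl fun i _ => ?_
        have : u ≤ T n (n + i) := by conv_lhs => rw [← hTn n hn]
                                     exact hTmono n (by omega)
        rw [min_eq_right this, hT2 n i hn]
  have c1 : ∀ ω, Continuous fun s => Real.exp (B s ω - s / 2) := fun ω => by
    have := hB.continuous_paths ω; fun_prop
  have c2 : ∀ ω, Continuous fun s => Real.exp (B s ω + s - s / 2) := fun ω => by
    have := hB.continuous_paths ω; fun_prop
  have c3 : ∀ ω, Continuous fun s => Real.exp (B s ω + u - s / 2) := fun ω => by
    have := hB.continuous_paths ω; fun_prop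
  have m0 := hB.measurable
  -- total mass
  have mass : ∫⁻ ω, ENNReal.ofReal (Real.exp (B u ω - u / 2)) ∂P = 1 := by
    have h := bm_cm P B hB (T 1) (hTmono 1) (hT0 1) 1 1 le_rfl (fun _ => 1) measurable_const
    rw [hTn 1 one_ne_zero] at h
    simpa using h
  obtain ⟨C, hC⟩ : ∃ C : NNReal, ∀ x, G x ≤ C := by
    obtain ⟨C, hC⟩ := G.bounded
    have hC0 : 0 ≤ C := dist_nonneg.trans (hC (0,0) (0,0))
    refine ⟨Real.toNNReal C + G (0, 0), fun x => ?_⟩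
    have := hC x (0, 0)
    rw [NNReal.dist_eq] at this
    have := (abs_le.1 this).2
    rw [← NNReal.coe_le_coe]
    rw [NNReal.coe_add, Real.coe_toNNReal _ hC0]
    linarith
  have mR1 : ∀ (f : ℝ → Ω → ℝ), (∀ s, Measurable (f s)) → ∀ n, Measurable fun ω => R1 n (fun s => f s ω) :=
    fun f hf n => Finset.measurable_sum _ fun i _ => (hf _).const_mul _
  have mR2 : ∀ (f : ℝ → Ω → ℝ), (∀ s, Measurable (f s)) → ∀ n, Measurable fun ω => R2 n (fun s => f s ω) :=
    fun f hf n => Finset.measurable_sum _ fun i _ => (hf _).const_mul _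
  have lim1 : Filter.Tendsto (fun n : ℕ => ∫⁻ ω, ENNReal.ofReal (Real.exp (B u ω - u / 2)) *
        G (R1 n (fun s => Real.exp (B s ω - s / 2)), R2 n (fun s => Real.exp (B s ω - s / 2))) ∂P)
      Filter.atTop (nhds (∫⁻ ω, ENNReal.ofReal (Real.exp (B u ω - u / 2)) *
        G (∫ s in (0 : ℝ)..u, Real.exp (B s ω - s / 2), ∫ s in u..t, Real.exp (B s ω - s / 2)) ∂P)) := by
    refine tendsto_lintegral_of_dominated_convergence
      (fun ω => ENNReal.ofReal (Real.exp (B u ω - u / 2)) * C) ?_ ?_ ?_ ?_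
    · intro n
      refine Measurable.mul (by fun_prop) (Measurable.coe_nnreal_ennreal (G.continuous.measurable.comp ?_))
      exact (mR1 (fun s ω => Real.exp (B s ω - s / 2)) (fun s => by fun_prop) n).prodMk (mR2 (fun s ω => Real.exp (B s ω - s / 2)) (fun s => by fun_prop) n)
    · intro n
      filter_upwards with ω
      gcongr
      exact_mod_cast hC _
    · rw [lintegral_mul_const _ (by fun_prop), mass]
      simp
    · filter_upwards with ω
      refine ENNReal.Tendsto.const_mul ?_ (Or.inr ENNReal.ofReal_ne_top)
      rw [ENNReal.tendsto_coe]
      exact (G.continuous.tendsto _).comp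
        ((riemann_tendsto _ (c1 ω) 0 u hu).prodMk_nhds (riemann_tendsto _ (c1 ω) u t hut))
  have lim2 : Filter.Tendsto (fun n : ℕ => ∫⁻ ω, (G (R1 n (fun s => Real.exp (B s ω + s - s / 2)),
          R2 n (fun s => Real.exp (B s ω + u - s / 2))) : ENNReal) ∂P)
      Filter.atTop (nhds (∫⁻ ω, G (∫ s in (0 : ℝ)..u, Real.exp (B s ω + s - s / 2),
          ∫ s in u..t, Real.exp (B s ω + u - s / 2)) ∂P)) := by
    refine tendsto_lintegral_of_dominated_convergence
      (fun ω => (C : ENNReal)) ?_ ?_ ?_ ?_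
    · intro n
      refine Measurable.coe_nnreal_ennreal (G.continuous.measurable.comp ?_)
      exact (mR1 (fun s ω => Real.exp (B s ω + s - s / 2)) (fun s => by fun_prop) n).prodMk (mR2 (fun s ω => Real.exp (B s ω + u - s / 2)) (fun s => by fun_prop) n)
    · intro n
      filter_upwards with ω
      exact_mod_cast hC _
    · simp
    · filter_upwards with ω
      rw [ENNReal.tendsto_coe]
      exact (G.continuous.tendsto _).comp
        ((riemann_tendsto _ (c2 ω) 0 u hu).prodMk_nhds (riemann_tendsto _ (c3 ω) u t hut))
  refine tendsto_nhds_unique lim1 (lim2.congr' ?_)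
  filter_upwards [Filter.eventually_ne_atTop 0] with n hn
  exact (step n hn).symm

lemma mass_one {Ω : Type*} [MeasurableSpace Ω] (P : Measure Ω) (B : ℝ → Ω → ℝ)
    (hB : IsBrownianMotion P B) (u : ℝ) (hu : 0 ≤ u) :
    ∫⁻ ω, ENNReal.ofReal (Real.exp (B u ω - u / 2)) ∂P = 1 := by
  have := hB.isProbabilityMeasure
  simpa using cm_bounded P B hB u u hu le_rfl (BoundedContinuousFunction.const _ 1)

lemma cm_pair {Ω : Type*} [MeasurableSpace Ω] (P : Measure Ω) (B : ℝ → Ω → ℝ)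
    (hB : IsBrownianMotion P B) (u t : ℝ) (hu : 0 ≤ u) (hut : u ≤ t)
    (G : ℝ × ℝ → ENNReal) (hG : Measurable G) :
    ∫⁻ ω, ENNReal.ofReal (Real.exp (B u ω - u / 2)) *
        G (∫ s in (0 : ℝ)..u, Real.exp (B s ω - s / 2), ∫ s in u..t, Real.exp (B s ω - s / 2)) ∂P
      = ∫⁻ ω, G (∫ s in (0 : ℝ)..u, Real.exp (B s ω + s - s / 2),
          ∫ s in u..t, Real.exp (B s ω + u - s / 2)) ∂P := by
  have := hB.isProbabilityMeasure
  have m0 := hB.measurable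
  have c0 := hB.continuous_paths
  have mX : Measurable (fun ω => (∫ s in (0 : ℝ)..u, Real.exp (B s ω - s / 2), ∫ s in u..t, Real.exp (B s ω - s / 2))) :=
    (measurable_pathint (fun s ω => Real.exp (B s ω - s / 2)) (fun s => by fun_prop)
      (fun ω => by have := c0 ω; fun_prop) _ _ hu).prodMk
    (measurable_pathint (fun s ω => Real.exp (B s ω - s / 2)) (fun s => by fun_prop)
      (fun ω => by have := c0 ω; fun_prop) _ _ hut)
  have mY : Measurable (fun ω => (∫ s in (0 : ℝ)..u, Real.exp (B s ω + s - s / 2), ∫ s in u..t, Real.exp (B s ω + u - s / 2))) :=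
    (measurable_pathint (fun s ω => Real.exp (B s ω + s - s / 2)) (fun s => by fun_prop)
      (fun ω => by have := c0 ω; fun_prop) _ _ hu).prodMk
    (measurable_pathint (fun s ω => Real.exp (B s ω + u - s / 2)) (fun s => by fun_prop)
      (fun ω => by have := c0 ω; fun_prop) _ _ hut)
  have mD : Measurable (fun ω => ENNReal.ofReal (Real.exp (B u ω - u / 2))) := by fun_prop
  have key : ∀ G : ℝ × ℝ → ENNReal, Measurable G → ∫⁻ x, G x ∂((P.withDensity (fun ω => ENNReal.ofReal (Real.exp (B u ω - u / 2)))).map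
      (fun ω => (∫ s in (0 : ℝ)..u, Real.exp (B s ω - s / 2), ∫ s in u..t, Real.exp (B s ω - s / 2))))
      = ∫⁻ ω, ENNReal.ofReal (Real.exp (B u ω - u / 2)) *
        G (∫ s in (0 : ℝ)..u, Real.exp (B s ω - s / 2), ∫ s in u..t, Real.exp (B s ω - s / 2)) ∂P := by
    intro G hG
    rw [lintegral_map hG mX]
    exact lintegral_withDensity_eq_lintegral_mul _ mD (hG.comp mX)
  have hfin : IsFiniteMeasure (P.withDensity (fun ω => ENNReal.ofReal (Real.exp (B u ω - u / 2)))) := by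
    constructor
    rw [withDensity_apply _ MeasurableSet.univ, Measure.restrict_univ, mass_one P B hB u hu]
    simp
  have heq : (P.withDensity (fun ω => ENNReal.ofReal (Real.exp (B u ω - u / 2)))).map
      (fun ω => (∫ s in (0 : ℝ)..u, Real.exp (B s ω - s / 2), ∫ s in u..t, Real.exp (B s ω - s / 2)))
      = P.map (fun ω => (∫ s in (0 : ℝ)..u, Real.exp (B s ω + s - s / 2), ∫ s in u..t, Real.exp (B s ω + u - s / 2))) := by
    apply ext_of_forall_lintegral_eq_of_IsFiniteMeasure
    intro f
    have hf : Measurable (fun x => (f x : ENNReal)) := f.continuous.measurable.coe_nnreal_ennreal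
    rw [key _ hf, lintegral_map hf mY]
    exact cm_bounded P B hB u t hu hut f
  rw [← key G hG, heq, lintegral_map hG mY]


lemma path_cov (m : ℝ → ℝ) (hm : Continuous m) (hpos : ∀ s, 0 < m s) (t : ℝ) (ht : 0 ≤ t)
    (φ : ℝ → ENNReal) :
    ∫⁻ u in Icc 0 t, ENNReal.ofReal (Real.exp u * ∫ s in u..t, m s) *
        φ ((∫ s in (0 : ℝ)..u, Real.exp s * m s) + Real.exp u * ∫ s in u..t, m s)
      = ∫⁻ y in Icc (∫ s in (0 : ℝ)..t, m s) (∫ s in (0 : ℝ)..t, Real.exp s * m s), φ y := by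
  set f : ℝ → ℝ := fun u => (∫ s in (0 : ℝ)..u, Real.exp s * m s) + Real.exp u * ∫ s in u..t, m s with hf
  have hder : ∀ u, HasDerivAt f (Real.exp u * ∫ s in u..t, m s) u := by
    intro u
    have hc : Continuous (fun s => Real.exp s * m s) := by fun_prop
    have h1 := (hc.integral_hasStrictDerivAt 0 u).hasDerivAt
    have h2 : HasDerivAt (fun u => ∫ s in u..t, m s) (-m u) u :=
      intervalIntegral.integral_hasDerivAt_left (hm.intervalIntegrable _ _)
        (hm.stronglyMeasurableAtFilter _ _) hm.continuousAt
    have h3 := h1.add ((Real.hasDerivAt_exp u).mul h2)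
    exact h3.congr_deriv (by ring)
  have hnn : ∀ u ∈ Icc 0 t, 0 ≤ Real.exp u * ∫ s in u..t, m s := fun u hu =>
    mul_nonneg (Real.exp_pos _).le (intervalIntegral.integral_nonneg hu.2 fun s _ => (hpos s).le)
  have hcont : Continuous f := continuous_iff_continuousAt.2 fun u => (hder u).continuousAt
  have hmono : MonotoneOn f (Icc 0 t) := by
    apply monotoneOn_of_deriv_nonneg (convex_Icc 0 t) hcont.continuousOn
    · exact fun u _ => (hder u).differentiableAt.differentiableWithinAt
    · intro u hu
      rw [(hder u).deriv]
      exact hnn u (interior_subset hu)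
  have himg : f '' Icc 0 t = Icc (∫ s in (0 : ℝ)..t, m s) (∫ s in (0 : ℝ)..t, Real.exp s * m s) := by
    have h0 : f 0 = ∫ s in (0 : ℝ)..t, m s := by simp [hf]
    have h1 : f t = ∫ s in (0 : ℝ)..t, Real.exp s * m s := by simp [hf]
    rw [← h0, ← h1]
    apply Subset.antisymm
    · rintro _ ⟨u, hu, rfl⟩
      exact ⟨hmono ⟨le_rfl, ht⟩ hu hu.1, hmono hu ⟨ht, le_rfl⟩ hu.2⟩
    · exact intermediate_value_Icc ht hcont.continuousOn
  rw [← himg, lintegral_image_eq_lintegral_deriv_mul_of_monotoneOn measurableSet_Icc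
    (fun u _ => (hder u).hasDerivWithinAt) hmono]

lemma path_sq (m : ℝ → ℝ) (hm : Continuous m) (hpos : ∀ s, 0 < m s) (t : ℝ) (ht : 0 ≤ t) :
    ∫⁻ u in Icc 0 t, ENNReal.ofReal (m u * ∫ s in u..t, m s)
      = ENNReal.ofReal ((∫ s in (0 : ℝ)..t, m s) ^ 2 / 2) := by
  have h2 : ∀ u, HasDerivAt (fun u => ∫ s in u..t, m s) (-m u) u := fun u =>
      intervalIntegral.integral_hasDerivAt_left (hm.intervalIntegrable _ _)
        (hm.stronglyMeasurableAtFilter _ _) hm.continuousAt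
  have hcont : Continuous (fun u => ∫ s in u..t, m s) :=
    continuous_iff_continuousAt.2 fun u => (h2 u).continuousAt
  have hg : Continuous (fun u => m u * ∫ s in u..t, m s) := hm.mul hcont
  have hnn : ∀ u ∈ Icc 0 t, 0 ≤ m u * ∫ s in u..t, m s := fun u hu =>
    mul_nonneg (hpos u).le (intervalIntegral.integral_nonneg hu.2 fun s _ => (hpos s).le)
  rw [← ofReal_integral_eq_lintegral_ofReal]
  · congr 1
    rw [integral_Icc_eq_integral_Ioc, ← intervalIntegral.integral_of_le ht]
    have hd : ∀ u ∈ uIcc 0 t, HasDerivAt (fun u => -((∫ s in u..t, m s) ^ 2 / 2))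
        (m u * ∫ s in u..t, m s) u := by
      intro u _
      exact (((h2 u).pow 2).div_const 2).neg.congr_deriv (by push_cast; ring)
    rw [intervalIntegral.integral_eq_sub_of_hasDerivAt hd (hg.intervalIntegrable _ _)]
    simp
  · exact hg.integrableOn_Icc
  · exact (ae_restrict_iff' measurableSet_Icc).2 (Filter.Eventually.of_forall hnn)

lemma measurable_pathint' {Ω : Type*} [MeasurableSpace Ω] (f : ℝ → Ω → ℝ)
    (hm : ∀ s, Measurable (f s)) (hc : ∀ ω, Continuous fun s => f s ω) (a b : ℝ) :
    Measurable (fun ω => ∫ s in a..b, f s ω) := by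
  rcases le_total a b with h | h
  · exact measurable_pathint f hm hc a b h
  · simp_rw [intervalIntegral.integral_symm b a]
    exact (measurable_pathint f hm hc b a h).neg

lemma main_identity {Ω : Type*} [MeasurableSpace Ω] (P : Measure Ω) (B : ℝ → Ω → ℝ)
    (hB : IsBrownianMotion P B) (t : ℝ) (ht : 0 ≤ t) (φ : ℝ → ENNReal) (hφ : Measurable φ) :
    ∫⁻ ω, φ (A B t ω) * ENNReal.ofReal ((A B t ω) ^ 2 / 2) ∂P
      = ∫⁻ y, φ y * P {ω | A B t ω ≤ y ∧ y ≤ Adrift B 1 t ω} := by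
  have := hB.isProbabilityMeasure
  have m0 := hB.measurable
  have c0 := hB.continuous_paths
  set m : ℝ → Ω → ℝ := fun s ω => Real.exp (B s ω - s / 2) with hmdef
  have cm : ∀ ω, Continuous fun s => m s ω := fun ω => by have := c0 ω; simp only [hmdef]; fun_prop
  have mm : ∀ s, Measurable (m s) := fun s => by simp only [hmdef]; fun_prop
  have pm : ∀ s ω, 0 < m s ω := fun s ω => Real.exp_pos _
  have cem : ∀ ω, Continuous fun s => Real.exp s * m s ω := fun ω => by have := cm ω; fun_prop
  have mem : ∀ s, Measurable fun ω => Real.exp s * m s ω := fun s => (mm s).const_mul _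
  have hA : ∀ ω, A B t ω = ∫ s in (0 : ℝ)..t, m s ω := fun ω => rfl
  have hA1 : ∀ ω, Adrift B 1 t ω = ∫ s in (0 : ℝ)..t, Real.exp s * m s ω := by
    intro ω
    unfold Adrift
    congr 1 with s
    simp only [hmdef]
    rw [← Real.exp_add]
    congr 1; ring
  -- joint measurability
  have jm : Measurable (fun p : ℝ × Ω => m p.1 p.2) :=
    measurable_uncurry_of_continuous_of_measurable (u := m) cm mm
  have jJ2 : Measurable (fun p : ℝ × Ω => ∫ s in p.1..t, m s p.2) := by
    refine measurable_uncurry_of_continuous_of_measurable (u := fun u ω => ∫ s in u..t, m s ω) ?_ ?_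
    · intro ω
      have h : ∀ u, HasDerivAt (fun u => ∫ s in u..t, m s ω) (-m u ω) u := fun u =>
        intervalIntegral.integral_hasDerivAt_left ((cm ω).intervalIntegrable _ _)
          ((cm ω).stronglyMeasurableAtFilter _ _) (cm ω).continuousAt
      exact continuous_iff_continuousAt.2 fun u => (h u).continuousAt
    · intro u
      exact measurable_pathint' m mm cm u t
  have jK1 : Measurable (fun p : ℝ × Ω => ∫ s in (0 : ℝ)..p.1, Real.exp s * m s p.2) := by
    refine measurable_uncurry_of_continuous_of_measurable
      (u := fun u ω => ∫ s in (0 : ℝ)..u, Real.exp s * m s ω) ?_ ?_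
    · intro ω
      exact continuous_iff_continuousAt.2 fun u =>
        ((cem ω).integral_hasStrictDerivAt 0 u).hasDerivAt.continuousAt
    · intro u
      exact measurable_pathint' (fun s ω => Real.exp s * m s ω) mem cem 0 u
  have mA : Measurable (A B t) := measurable_pathint' m mm cm 0 t
  have mA1 : Measurable (Adrift B 1 t) := by
    have : Adrift B 1 t = fun ω => ∫ s in (0 : ℝ)..t, Real.exp s * m s ω := funext hA1
    rw [this]
    exact measurable_pathint' (fun s ω => Real.exp s * m s ω) mem cem 0 t
  -- step 1
  have s1 : ∫⁻ ω, φ (A B t ω) * ENNReal.ofReal ((A B t ω) ^ 2 / 2) ∂P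
      = ∫⁻ ω, (∫⁻ u in Icc 0 t, φ (A B t ω) * ENNReal.ofReal (m u ω * ∫ s in u..t, m s ω)) ∂P := by
    congr 1 with ω
    rw [lintegral_const_mul, path_sq (fun s => m s ω) (cm ω) (fun s => pm s ω) t ht, hA]
    have e : Measurable (fun u : ℝ => (u, ω)) := by fun_prop
    exact ((jm.comp e).mul (jJ2.comp e)).ennreal_ofReal
  have s2 : ∫⁻ ω, (∫⁻ u in Icc 0 t, φ (A B t ω) * ENNReal.ofReal (m u ω * ∫ s in u..t, m s ω)) ∂P
      = ∫⁻ u in Icc 0 t, ∫⁻ ω, φ (A B t ω) * ENNReal.ofReal (m u ω * ∫ s in u..t, m s ω) ∂P := by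
    apply lintegral_lintegral_swap
    apply Measurable.aemeasurable
    refine Measurable.mul (hφ.comp (mA.comp measurable_fst)) ?_
    exact ((jm.comp measurable_swap).mul (jJ2.comp measurable_swap)).ennreal_ofReal
  have s3 : ∀ u ∈ Icc 0 t, ∫⁻ ω, φ (A B t ω) * ENNReal.ofReal (m u ω * ∫ s in u..t, m s ω) ∂P
      = ∫⁻ ω, ENNReal.ofReal (Real.exp u * ∫ s in u..t, m s ω) *
        φ ((∫ s in (0 : ℝ)..u, Real.exp s * m s ω) + Real.exp u * ∫ s in u..t, m s ω) ∂P := by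
    intro u hu
    have h := cm_pair P B hB u t hu.1 hu.2 (fun p => ENNReal.ofReal p.2 * φ (p.1 + p.2))
      (by fun_prop)
    refine Eq.trans ?_ (h.trans ?_)
    · congr 1 with ω
      simp only
      rw [intervalIntegral.integral_add_adjacent_intervals ((cm ω).intervalIntegrable _ _)
        ((cm ω).intervalIntegrable _ _), ENNReal.ofReal_mul (pm u ω).le, mul_comm, mul_assoc]
      rfl
    · congr 1 with ω
      have e1 : ∫ s in (0 : ℝ)..u, Real.exp (B s ω + s - s / 2)
          = ∫ s in (0 : ℝ)..u, Real.exp s * m s ω := by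
        congr 1 with s
        simp only [hmdef]
        rw [← Real.exp_add]
        congr 1; ring
      have e2 : ∫ s in u..t, Real.exp (B s ω + u - s / 2)
          = Real.exp u * ∫ s in u..t, m s ω := by
        rw [← intervalIntegral.integral_const_mul]
        congr 1 with s
        simp only [hmdef]
        rw [← Real.exp_add]
        congr 1; ring
      rw [e1, e2]
  have s4 : ∫⁻ u in Icc 0 t, ∫⁻ ω, ENNReal.ofReal (Real.exp u * ∫ s in u..t, m s ω) *
        φ ((∫ s in (0 : ℝ)..u, Real.exp s * m s ω) + Real.exp u * ∫ s in u..t, m s ω) ∂P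
      = ∫⁻ ω, (∫⁻ u in Icc 0 t, ENNReal.ofReal (Real.exp u * ∫ s in u..t, m s ω) *
        φ ((∫ s in (0 : ℝ)..u, Real.exp s * m s ω) + Real.exp u * ∫ s in u..t, m s ω)) ∂P := by
    apply lintegral_lintegral_swap
    apply Measurable.aemeasurable
    have e : Measurable (fun p : ℝ × Ω => Real.exp p.1) := by fun_prop
    exact ((e.mul jJ2).ennreal_ofReal).mul (hφ.comp (jK1.add (e.mul jJ2)))
  have s5 : ∀ ω, ∫⁻ u in Icc 0 t, ENNReal.ofReal (Real.exp u * ∫ s in u..t, m s ω) *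
        φ ((∫ s in (0 : ℝ)..u, Real.exp s * m s ω) + Real.exp u * ∫ s in u..t, m s ω)
      = ∫⁻ y, φ y * {p : Ω × ℝ | A B t p.1 ≤ p.2 ∧ p.2 ≤ Adrift B 1 t p.1}.indicator 1 (ω, y) := by
    intro ω
    rw [path_cov (fun s => m s ω) (cm ω) (fun s => pm s ω) t ht φ, ← hA, ← hA1,
      ← lintegral_indicator measurableSet_Icc]
    congr 1 with y
    by_cases hy : y ∈ Icc (A B t ω) (Adrift B 1 t ω)
    · rw [indicator_of_mem hy, indicator_of_mem (show (ω, y) ∈ _ from hy)]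
      simp
    · rw [indicator_of_notMem hy, indicator_of_notMem (show (ω, y) ∉ _ from hy)]
      simp
  have mS : MeasurableSet {p : Ω × ℝ | A B t p.1 ≤ p.2 ∧ p.2 ≤ Adrift B 1 t p.1} :=
    (measurableSet_le (mA.comp measurable_fst) measurable_snd).inter
      (measurableSet_le measurable_snd (mA1.comp measurable_fst))
  rw [s1, s2, setLIntegral_congr_fun measurableSet_Icc s3, s4]
  simp_rw [s5]
  rw [lintegral_lintegral_swap (((hφ.comp measurable_snd).mul
    ((measurable_one (α := ENNReal)).indicator mS)).aemeasurable)]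
  congr 1 with y
  have mSy : MeasurableSet {ω | A B t ω ≤ y ∧ y ≤ Adrift B 1 t ω} :=
    (measurableSet_le mA measurable_const).inter (measurableSet_le measurable_const mA1)
  have : ∀ ω, {p : Ω × ℝ | A B t p.1 ≤ p.2 ∧ p.2 ≤ Adrift B 1 t p.1}.indicator (1 : Ω × ℝ → ENNReal) (ω, y)
      = {ω | A B t ω ≤ y ∧ y ≤ Adrift B 1 t ω}.indicator 1 ω := fun ω => rfl
  simp_rw [this]
  rw [lintegral_const_mul _ (measurable_one.indicator mSy), lintegral_indicator_one mSy]


lemma measurable_A {Ω : Type*} [MeasurableSpace Ω] {P : Measure Ω} {B : ℝ → Ω → ℝ}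
    (hB : IsBrownianMotion P B) (t : ℝ) : Measurable (A B t) := by
  have m0 := hB.measurable
  have c0 := hB.continuous_paths
  exact measurable_pathint' (fun s ω => Real.exp (B s ω - s / 2)) (fun s => by fun_prop)
    (fun ω => by have := c0 ω; fun_prop) 0 t

lemma measurable_Adrift {Ω : Type*} [MeasurableSpace Ω] {P : Measure Ω} {B : ℝ → Ω → ℝ}
    (hB : IsBrownianMotion P B) (ν t : ℝ) : Measurable (Adrift B ν t) := by
  have m0 := hB.measurable
  have c0 := hB.continuous_paths
  exact measurable_pathint' (fun s ω => Real.exp (B s ω + (ν - 1 / 2) * s)) (fun s => by fun_prop)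
    (fun ω => by have := c0 ω; fun_prop) 0 t

lemma A_le_Adrift {Ω : Type*} [MeasurableSpace Ω] {P : Measure Ω} {B : ℝ → Ω → ℝ}
    (hB : IsBrownianMotion P B) (t : ℝ) (ht : 0 ≤ t) (ω : Ω) : A B t ω ≤ Adrift B 1 t ω := by
  have c0 := hB.continuous_paths ω
  apply intervalIntegral.integral_mono_on ht
  · exact Continuous.intervalIntegrable (by fun_prop) _ _
  · exact Continuous.intervalIntegrable (by fun_prop) _ _
  · intro s hs
    apply Real.exp_le_exp.2
    linarith [hs.1]

lemma integrable_A {Ω : Type*} [MeasurableSpace Ω] {P : Measure Ω} {B : ℝ → Ω → ℝ}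
    (hB : IsBrownianMotion P B) (t : ℝ) (ht : 0 ≤ t) : Integrable (A B t) P := by
  have := hB.isProbabilityMeasure
  have m0 := hB.measurable
  have c0 := hB.continuous_paths
  have hnn : ∀ ω, 0 ≤ A B t ω := fun ω =>
    intervalIntegral.integral_nonneg ht fun s _ => (Real.exp_pos _).le
  have jm : Measurable (fun p : ℝ × Ω => Real.exp (B p.1 p.2 - p.1 / 2)) :=
    measurable_uncurry_of_continuous_of_measurable (u := fun s ω => Real.exp (B s ω - s / 2))
      (fun ω => by have := c0 ω; fun_prop) (fun s => by fun_prop)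
  refine ⟨(measurable_A hB t).aestronglyMeasurable, ?_⟩
  rw [hasFiniteIntegral_iff_ofReal (Filter.Eventually.of_forall hnn)]
  have e : ∀ ω, ENNReal.ofReal (A B t ω)
      = ∫⁻ s in Icc 0 t, ENNReal.ofReal (Real.exp (B s ω - s / 2)) := by
    intro ω
    have := c0 ω
    have hc : Continuous (fun s => Real.exp (B s ω - s / 2)) := by fun_prop
    rw [← ofReal_integral_eq_lintegral_ofReal hc.integrableOn_Icc
      (Filter.Eventually.of_forall fun s => (Real.exp_pos _).le),
      integral_Icc_eq_integral_Ioc, ← intervalIntegral.integral_of_le ht]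
    rfl
  simp_rw [e]
  rw [lintegral_lintegral_swap ((jm.comp measurable_swap).ennreal_ofReal.aemeasurable),
    setLIntegral_congr_fun measurableSet_Icc (fun s hs => mass_one P B hB s hs.1)]
  simp

lemma A_no_atom {Ω : Type*} [MeasurableSpace Ω] {P : Measure Ω} {B : ℝ → Ω → ℝ}
    (hB : IsBrownianMotion P B) (t : ℝ) (ht : 0 ≤ t) (k : ℝ) (hk : 0 < k) :
    P {ω | A B t ω = k} = 0 := by
  have h := main_identity P B hB t ht (({k} : Set ℝ).indicator 1)
    (measurable_one.indicator (measurableSet_singleton k))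
  have mk : MeasurableSet {ω | A B t ω = k} := measurable_A hB t (measurableSet_singleton k)
  have r : ∫⁻ y, ({k} : Set ℝ).indicator 1 y * P {ω | A B t ω ≤ y ∧ y ≤ Adrift B 1 t ω} = 0 := by
    have : ∀ᵐ y : ℝ, y ∉ ({k} : Set ℝ) := measure_eq_zero_iff_ae_notMem.1 (by simp)
    rw [← lintegral_zero (α := ℝ) (μ := volume)]
    apply lintegral_congr_ae
    filter_upwards [this] with y hy
    rw [indicator_of_notMem hy, zero_mul]
  rw [r] at h
  have l : ∫⁻ ω, ({k} : Set ℝ).indicator 1 (A B t ω) * ENNReal.ofReal ((A B t ω) ^ 2 / 2) ∂P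
      = P {ω | A B t ω = k} * ENNReal.ofReal (k ^ 2 / 2) := by
    rw [← lintegral_indicator_one mk, ← lintegral_mul_const _ (measurable_one.indicator mk)]
    congr 1 with ω
    by_cases hw : A B t ω = k
    · rw [hw, indicator_of_mem (mem_singleton k), indicator_of_mem (show ω ∈ _ from hw)]
      simp
    · rw [indicator_of_notMem (show A B t ω ∉ ({k} : Set ℝ) from hw), indicator_of_notMem (show ω ∉ _ from hw)]
      simp
  rw [l] at h
  have hp : ENNReal.ofReal (k ^ 2 / 2) ≠ 0 := by
    rw [Ne, ENNReal.ofReal_eq_zero, not_le]; positivity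
  exact (mul_eq_zero.1 h).resolve_right hp

lemma Adrift_no_atom {Ω : Type*} [MeasurableSpace Ω] {P : Measure Ω} {B : ℝ → Ω → ℝ}
    (hB : IsBrownianMotion P B) (t : ℝ) (ht : 0 ≤ t) (k : ℝ) (hk : 0 < k) :
    P {ω | Adrift B 1 t ω = k} = 0 := by
  have mk : MeasurableSet {ω | Adrift B 1 t ω = k} :=
    measurable_Adrift hB 1 t (measurableSet_singleton k)
  have h := cm_pair P B hB t t ht le_rfl (fun p => ({k} : Set ℝ).indicator 1 p.1)
    ((measurable_one.indicator (measurableSet_singleton k)).comp measurable_fst)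
  have e : ∀ ω, ∫ s in (0 : ℝ)..t, Real.exp (B s ω + s - s / 2) = Adrift B 1 t ω := by
    intro ω
    unfold Adrift
    congr 1 with s
    congr 1; ring
  simp only [e] at h
  rw [← lintegral_indicator_one mk]
  refine Eq.trans h.symm ?_
  rw [← lintegral_zero (α := Ω) (μ := P)]
  apply lintegral_congr_ae
  filter_upwards [measure_eq_zero_iff_ae_notMem.1 (A_no_atom hB t ht k hk)] with ω hw
  rw [indicator_of_notMem, mul_zero]
  exact hw

lemma cdf_cont {Ω : Type*} [MeasurableSpace Ω] {P : Measure Ω} [IsProbabilityMeasure P]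
    (Y : Ω → ℝ) (hY : Measurable Y) (k : ℝ) (hk : P {ω | Y ω = k} = 0) :
    ContinuousAt (fun y => (P {ω | Y ω ≤ y}).toReal) k := by
  have e : (fun y => (P {ω | Y ω ≤ y}).toReal) = fun y => ∫ ω, {ω | Y ω ≤ y}.indicator 1 ω ∂P := by
    ext y
    rw [integral_indicator_one (show MeasurableSet {ω | Y ω ≤ y} from hY measurableSet_Iic)]
    rfl
  rw [e]
  apply continuousAt_of_dominated (bound := fun _ => (1 : ℝ))
  · filter_upwards with y
    exact (measurable_one.indicator (hY measurableSet_Iic)).aestronglyMeasurable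
  · filter_upwards with y
    filter_upwards with ω
    by_cases h : ω ∈ {ω | Y ω ≤ y}
    · rw [indicator_of_mem h]; simp
    · rw [indicator_of_notMem h]; simp
  · exact integrable_const _
  · filter_upwards [measure_eq_zero_iff_ae_notMem.1 hk] with ω hw
    have hne : Y ω ≠ k := hw
    rcases lt_or_gt_of_ne hne with h | h
    · apply ContinuousAt.congr (f := fun _ => (1 : ℝ)) continuousAt_const
      filter_upwards [lt_mem_nhds h] with y hy
      rw [indicator_of_mem (show ω ∈ {ω | Y ω ≤ y} from hy.le)]; rfl
    · apply ContinuousAt.congr (f := fun _ => (0 : ℝ)) continuousAt_const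
      filter_upwards [gt_mem_nhds h] with y hy
      rw [indicator_of_notMem (show ω ∉ {ω | Y ω ≤ y} from not_le.2 hy)]

lemma cdf_sub {Ω : Type*} [MeasurableSpace Ω] {P : Measure Ω} {B : ℝ → Ω → ℝ}
    (hB : IsBrownianMotion P B) (t : ℝ) (ht : 0 ≤ t) (y : ℝ) (hy : 0 < y) :
    P {ω | A B t ω ≤ y ∧ y ≤ Adrift B 1 t ω}
      = ENNReal.ofReal ((P {ω | A B t ω ≤ y}).toReal - (P {ω | Adrift B 1 t ω ≤ y}).toReal) := by
  have := hB.isProbabilityMeasure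
  have mA := measurable_A hB t
  have mA1 := measurable_Adrift hB 1 t
  have m1 : MeasurableSet {ω | A B t ω ≤ y} := mA measurableSet_Iic
  have m2 : MeasurableSet {ω | Adrift B 1 t ω ≤ y} := mA1 measurableSet_Iic
  have hsub : {ω | Adrift B 1 t ω ≤ y} ⊆ {ω | A B t ω ≤ y} := fun ω h =>
    (A_le_Adrift hB t ht ω).trans h
  have e : P {ω | A B t ω ≤ y ∧ y ≤ Adrift B 1 t ω}
      = P ({ω | A B t ω ≤ y} \ {ω | Adrift B 1 t ω ≤ y}) := by
    apply measure_congr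
    filter_upwards [measure_eq_zero_iff_ae_notMem.1 (Adrift_no_atom hB t ht y hy)] with ω hw
    have hne : Adrift B 1 t ω ≠ y := hw
    apply propext
    show (A B t ω ≤ y ∧ y ≤ Adrift B 1 t ω) ↔ (A B t ω ≤ y ∧ ¬ Adrift B 1 t ω ≤ y)
    rw [not_le]
    constructor
    · rintro ⟨h1, h2⟩; exact ⟨h1, lt_of_le_of_ne h2 hne.symm⟩
    · rintro ⟨h1, h2⟩; exact ⟨h1, h2.le⟩
  rw [e, measure_diff hsub m2.nullMeasurableSet (measure_ne_top _ _),
    ENNReal.ofReal_sub _ ENNReal.toReal_nonneg, ENNReal.ofReal_toReal (measure_ne_top _ _),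
    ENNReal.ofReal_toReal (measure_ne_top _ _)]

lemma cdf_deriv {Ω : Type*} [MeasurableSpace Ω] {P : Measure Ω} {B : ℝ → Ω → ℝ}
    (hB : IsBrownianMotion P B) (t : ℝ) (ht : 0 ≤ t) (a : ℝ) (ha : 0 < a) :
    HasDerivAt (fun y => (P {ω | A B t ω ≤ y}).toReal)
      (2 / a ^ 2 * ((P {ω | A B t ω ≤ a}).toReal - (P {ω | Adrift B 1 t ω ≤ a}).toReal)) a := by
  have := hB.isProbabilityMeasure
  have mA := measurable_A hB t
  have mA1 := measurable_Adrift hB 1 t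
  set F : ℝ → ℝ := fun y => (P {ω | A B t ω ≤ y}).toReal with hF
  set F1 : ℝ → ℝ := fun y => (P {ω | Adrift B 1 t ω ≤ y}).toReal with hF1
  set g : ℝ → ℝ := fun y => 2 / y ^ 2 * (F y - F1 y) with hg
  have hle : ∀ y, F1 y ≤ F y := fun y => ENNReal.toReal_mono (measure_ne_top _ _)
    (measure_mono fun ω h => (A_le_Adrift hB t ht ω).trans h)
  have gc : ContinuousOn g (Ioi 0) := by
    intro y hy
    have hy' : (0 : ℝ) < y := hy
    apply ContinuousAt.continuousWithinAt
    refine ContinuousAt.mul ?_ ((cdf_cont _ mA y (A_no_atom hB t ht y hy)).sub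
      (cdf_cont _ mA1 y (Adrift_no_atom hB t ht y hy)))
    exact continuousAt_const.div (continuousAt_id.pow 2) (by simp; positivity)
  have key : ∀ k ∈ Ioi (a / 2), F k = F (a / 2) + ∫ y in (a / 2)..k, g y := by
    intro k hk
    have hk' : a / 2 < k := hk
    have hsub : Icc (a / 2) k ⊆ Ioi 0 := fun y hy => lt_of_lt_of_le (by positivity) hy.1
    have h := main_identity P B hB t ht
      ((Ioc (a / 2) k).indicator (fun y => ENNReal.ofReal (2 / y ^ 2)))
      (Measurable.indicator (by fun_prop) measurableSet_Ioc)
    have mk : MeasurableSet {ω | A B t ω ∈ Ioc (a / 2) k} := mA measurableSet_Ioc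
    have l : ∫⁻ ω, (Ioc (a / 2) k).indicator (fun y => ENNReal.ofReal (2 / y ^ 2)) (A B t ω)
        * ENNReal.ofReal ((A B t ω) ^ 2 / 2) ∂P = P {ω | A B t ω ∈ Ioc (a / 2) k} := by
      rw [← lintegral_indicator_one mk]
      congr 1 with ω
      by_cases hw : A B t ω ∈ Ioc (a / 2) k
      · have hp : 0 < A B t ω := lt_trans (by positivity) hw.1
        rw [indicator_of_mem hw, indicator_of_mem (show ω ∈ _ from hw),
          ← ENNReal.ofReal_mul (by positivity)]
        have : 2 / A B t ω ^ 2 * (A B t ω ^ 2 / 2) = 1 := by field_simp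
        rw [this]; simp
      · rw [indicator_of_notMem hw, indicator_of_notMem (show ω ∉ _ from hw), zero_mul]
    have r : ∫⁻ y, (Ioc (a / 2) k).indicator (fun y => ENNReal.ofReal (2 / y ^ 2)) y
        * P {ω | A B t ω ≤ y ∧ y ≤ Adrift B 1 t ω} = ENNReal.ofReal (∫ y in (a / 2)..k, g y) := by
      rw [intervalIntegral.integral_of_le hk'.le, ofReal_integral_eq_lintegral_ofReal,
        ← lintegral_indicator measurableSet_Ioc]
      · congr 1 with y
        by_cases hy : y ∈ Ioc (a / 2) k
        · rw [indicator_of_mem hy, indicator_of_mem hy,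
            cdf_sub hB t ht y (hsub (Ioc_subset_Icc_self hy)), ← ENNReal.ofReal_mul (by positivity)]
        · rw [indicator_of_notMem hy, indicator_of_notMem hy, zero_mul]
      · exact ((gc.mono hsub).integrableOn_Icc).mono_set Ioc_subset_Icc_self
      · filter_upwards with y
        exact mul_nonneg (by positivity) (sub_nonneg.2 (hle y))
    rw [l, r] at h
    have hint : 0 ≤ ∫ y in (a / 2)..k, g y := by
      apply intervalIntegral.integral_nonneg hk'.le
      intro y _
      exact mul_nonneg (by positivity) (sub_nonneg.2 (hle y))
    have hd : {ω | A B t ω ∈ Ioc (a / 2) k} = {ω | A B t ω ≤ k} \ {ω | A B t ω ≤ a / 2} := by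
      ext ω
      simp only [mem_Ioc, mem_setOf_eq, mem_diff, not_le]
      tauto
    have m2 : MeasurableSet {ω | A B t ω ≤ a / 2} := mA measurableSet_Iic
    have hs : {ω | A B t ω ≤ a / 2} ⊆ {ω | A B t ω ≤ k} := fun ω h => le_trans h hk'.le
    rw [hd, measure_diff hs m2.nullMeasurableSet (measure_ne_top _ _)] at h
    have h2 := congrArg ENNReal.toReal h
    rw [ENNReal.toReal_sub_of_le (measure_mono hs) (measure_ne_top _ _),
      ENNReal.toReal_ofReal hint] at h2
    simp only [hF]
    linarith
  have hsub : uIcc (a / 2) a ⊆ Ioi 0 := by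
    rw [uIcc_of_le (by linarith)]
    exact fun y hy => lt_of_lt_of_le (by positivity) hy.1
  have hd : HasDerivAt (fun k => ∫ y in (a / 2)..k, g y) (g a) a :=
    intervalIntegral.integral_hasDerivAt_right ((gc.mono hsub).intervalIntegrable)
      (gc.stronglyMeasurableAtFilter isOpen_Ioi a ha) (gc.continuousAt (Ioi_mem_nhds ha))
  refine (hd.const_add (F (a / 2))).congr_of_eventuallyEq ?_
  filter_upwards [Ioi_mem_nhds (show a / 2 < a by linarith)] with k hk
  exact key k hk

lemma call_deriv {Ω : Type*} [MeasurableSpace Ω] {P : Measure Ω} [IsProbabilityMeasure P]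
    (Y : Ω → ℝ) (hY : Measurable Y) (hi : Integrable Y P) (k : ℝ) (hk : P {ω | Y ω = k} = 0) :
    HasDerivAt (fun k => ∫ ω, max (Y ω - k) 0 ∂P) ((P {ω | Y ω ≤ k}).toReal - 1) k := by
  have h := hasDerivAt_integral_of_dominated_loc_of_lip (μ := P) (𝕜 := ℝ) (x₀ := k) (s := univ)
    (F := fun k ω => max (Y ω - k) 0) (F' := fun ω => {ω | Y ω ≤ k}.indicator 1 ω - 1)
    (bound := fun _ => 1) Filter.univ_mem
    (Filter.Eventually.of_forall fun x =>
      ((hY.sub_const x).max measurable_const).aestronglyMeasurable)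
    ((hi.sub (integrable_const k)).sup (integrable_const 0))
    ((measurable_one.indicator (hY measurableSet_Iic)).sub_const 1).aestronglyMeasurable
    ?_ (integrable_const _) ?_
  · refine h.2.congr_deriv ?_
    rw [integral_sub _ (integrable_const _), integral_indicator_one (show MeasurableSet {ω | Y ω ≤ k} from hY measurableSet_Iic)]
    · simp [Measure.real]
    · exact (integrable_const (1 : ℝ)).indicator (hY measurableSet_Iic)
  · filter_upwards with ω
    apply LipschitzWith.lipschitzOnWith
    apply LipschitzWith.of_dist_le_mul
    intro x y
    simp only [Real.dist_eq]
    have := abs_max_sub_max_le_abs (Y ω - x) (Y ω - y) 0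
    simp only [Real.nnabs_of_nonneg zero_le_one, Real.toNNReal_one, NNReal.coe_one, one_mul]
    refine this.trans (le_of_eq ?_)
    rw [abs_sub_comm x y]
    congr 1; ring
  · filter_upwards [measure_eq_zero_iff_ae_notMem.1 hk] with ω hw
    have hne : Y ω ≠ k := hw
    rcases lt_or_gt_of_ne hne with h | h
    · rw [indicator_of_mem (show ω ∈ {ω | Y ω ≤ k} from h.le)]
      refine ((hasDerivAt_const k (0 : ℝ)).congr_of_eventuallyEq ?_).congr_deriv (by simp)
      filter_upwards [lt_mem_nhds h] with y hy
      exact max_eq_right (by linarith)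
    · rw [indicator_of_notMem (show ω ∉ {ω | Y ω ≤ k} from not_le.2 h)]
      refine (((hasDerivAt_id k).const_sub (Y ω)).congr_of_eventuallyEq ?_).congr_deriv (by simp)
      filter_upwards [gt_mem_nhds h] with y hy
      exact max_eq_left (by simp; linarith)

variable {Ω : Type*} [MeasurableSpace Ω] (P : MeasureTheory.Measure Ω) (B : ℝ → Ω → ℝ)

theorem asian_call_gamma (hB : IsBrownianMotion P B)
    (κ σ r τ S₀ : ℝ) (hκ : 0 < κ) (hσ : 0 < σ) (hτ : 0 < τ) (hS : 0 < S₀) :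
    DifferentiableAt ℝ
      (fun S => S / (τ * σ ^ 2) * Real.exp (-r * τ) *
        ∫ ω, max (A B (σ ^ 2 * τ) ω - σ ^ 2 * κ * τ / S) 0 ∂P) S₀ ∧
    HasDerivAt
      (deriv (fun S => S / (τ * σ ^ 2) * Real.exp (-r * τ) *
        ∫ ω, max (A B (σ ^ 2 * τ) ω - σ ^ 2 * κ * τ / S) 0 ∂P))
      (σ ^ 2 * κ ^ 2 * τ / S₀ ^ 3 * Real.exp (-r * τ) *
        (2 / (σ ^ 2 * κ * τ / S₀) ^ 2 *
          ((P {ω | A B (τ * σ ^ 2) ω ≤ σ ^ 2 * κ * τ / S₀}).toReal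
            - (P {ω | Adrift B 1 (τ * σ ^ 2) ω ≤ σ ^ 2 * κ * τ / S₀}).toReal))) S₀ := by
  have := hB.isProbabilityMeasure
  rw [mul_comm (σ ^ 2) τ]
  set t := τ * σ ^ 2 with ht
  have htp : 0 < t := by positivity
  set b := σ ^ 2 * κ * τ with hb
  have hbp : 0 < b := by positivity
  set C : ℝ → ℝ := fun k => ∫ ω, max (A B t ω - k) 0 ∂P with hC
  set F : ℝ → ℝ := fun y => (P {ω | A B t ω ≤ y}).toReal with hF
  set c := Real.exp (-r * τ) with hc
  have hCd : ∀ k, 0 < k → HasDerivAt C (F k - 1) k := fun k hk =>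
    call_deriv (A B t) (measurable_A hB t) (integrable_A hB t htp.le) k (A_no_atom hB t htp.le k hk)
  have hbS : ∀ S : ℝ, 0 < S → HasDerivAt (fun S => b / S) (-b / S ^ 2) S := by
    intro S hS
    exact ((hasDerivAt_const S b).div (hasDerivAt_id S) hS.ne').congr_deriv (by simp)
  have h1 : ∀ S : ℝ, 0 < S → HasDerivAt (fun S => S / t * c * C (b / S))
      (c / t * (C (b / S) - b / S * (F (b / S) - 1))) S := by
    intro S hS
    have hc1 := (hCd (b / S) (by positivity)).comp S (hbS S hS)
    have := (((hasDerivAt_id S).div_const t).mul_const c).mul hc1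
    refine this.congr_deriv ?_
    simp only [id, Function.comp]
    field_simp
    ring
  refine ⟨(h1 S₀ hS).differentiableAt, ?_⟩
  have h2 : HasDerivAt (fun S => c / t * (C (b / S) - b / S * (F (b / S) - 1)))
      (σ ^ 2 * κ ^ 2 * τ / S₀ ^ 3 * c *
        (2 / (b / S₀) ^ 2 * (F (b / S₀) - (P {ω | Adrift B 1 t ω ≤ b / S₀}).toReal))) S₀ := by
    have hk : 0 < b / S₀ := by positivity
    have hc1 := (hCd (b / S₀) hk).comp S₀ (hbS S₀ hS)
    have hf1 := (cdf_deriv hB t htp.le (b / S₀) hk).comp S₀ (hbS S₀ hS)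
    have := (hc1.sub ((hbS S₀ hS).mul (hf1.sub_const 1))).const_mul (c / t)
    refine this.congr_deriv ?_
    simp only [Function.comp]
    change _ = σ ^ 2 * κ ^ 2 * τ / S₀ ^ 3 * c *
        (2 / (b / S₀) ^ 2 * (F (b / S₀) - (P {ω | Adrift B 1 t ω ≤ b / S₀}).toReal))
    change c / t * ((F (b / S₀) - 1) * (-b / S₀ ^ 2) - (-b / S₀ ^ 2 * (F (b / S₀) - 1) +
      b / S₀ * (2 / (b / S₀) ^ 2 * (F (b / S₀) - (P {ω | Adrift B 1 t ω ≤ b / S₀}).toReal) *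
        (-b / S₀ ^ 2)))) = _
    generalize 2 / (b / S₀) ^ 2 * (F (b / S₀) - (P {ω | Adrift B 1 t ω ≤ b / S₀}).toReal) = q
    rw [hb, ht]
    field_simp
    ring
  refine h2.congr_of_eventuallyEq ?_
  filter_upwards [Ioi_mem_nhds hS] with S hS'
  exact (h1 S hS').deriv
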